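/- Let S be an ordered semigroup satisfying axioms O1–O6. Then F(S), partially ordered pointwise, is a complete lattice: every subset of F(S) has a least upper bound and a greatest lower bound in F(S). -/

import Mathlib

open scoped ENNReal

/-- `CC s t` : `s` is (sequentially) compactly contained in `t`, written `s ≪ t`. -/
def CC {S : Type*} [AddCommMonoid S] [PartialOrder S] (s t : S) : Prop :=
  ∀ u : ℕ → S, Monotone u → ∀ x : S, IsLUB (Set.range u) x → t ≤ x → ∃ n, s ≤ u n

/-- An ordered semigroup (positive, with translation invariant order) satisfying axioms O1-O5. -/
structure CuO5 (S : Type*) [AddCommMonoid S] [PartialOrder S] : Prop where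
  addRightMono : ∀ {s t : S}, s ≤ t → ∀ r : S, s + r ≤ t + r
  zeroLe : ∀ s : S, 0 ≤ s
  O1 : ∀ u : ℕ → S, Monotone u → ∃ x : S, IsLUB (Set.range u) x
  O2 : ∀ s : S, ∃ u : ℕ → S, (∀ n, CC (u n) (u (n + 1))) ∧ IsLUB (Set.range u) s
  O3 : ∀ {s₁ t₁ s₂ t₂ : S}, CC s₁ t₁ → CC s₂ t₂ → CC (s₁ + s₂) (t₁ + t₂)
  O4 : ∀ u v : ℕ → S, Monotone u → Monotone v → ∀ x y : S,
    IsLUB (Set.range u) x → IsLUB (Set.range v) y →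
    IsLUB (Set.range fun n => u n + v n) (x + y)
  O5 : ∀ {s' s t : S}, CC s' s → s ≤ t → ∃ r : S, s' + r ≤ t ∧ t ≤ s + r

/-- Axioms O1-O6. -/
structure CuO6 (S : Type*) [AddCommMonoid S] [PartialOrder S] extends CuO5 S : Prop where
  O6 : ∀ {s r t : S}, s ≤ r + t → ∀ {s' : S}, CC s' s →
    ∃ r' t' : S, s' ≤ r' + t' ∧ r' ≤ r ∧ r' ≤ s ∧ t' ≤ t ∧ t' ≤ s

/-- A functional on `S`: additive, order preserving, zero preserving map to `[0,∞]`
preserving suprema of increasing sequences. -/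
structure IsFunctional {S : Type*} [AddCommMonoid S] [PartialOrder S] (l : S → ℝ≥0∞) : Prop where
  map_zero : l 0 = 0
  map_add : ∀ s t : S, l (s + t) = l s + l t
  mono : ∀ {s t : S}, s ≤ t → l s ≤ l t
  map_sup : ∀ u : ℕ → S, Monotone u → ∀ x : S, IsLUB (Set.range u) x → l x = ⨆ n, l (u n)

/-- Real multiplication on `S` : a map `(0,∞] × S → S` additive, order preserving and
sup-(of increasing sequences)-preserving in each variable, with `1 · s = s`.
Scalars are elements of `ℝ≥0∞` required to be positive. -/
structure RealMul (S : Type*) [AddCommMonoid S] [PartialOrder S] where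
  smul : ℝ≥0∞ → S → S
  add_left : ∀ {a b : ℝ≥0∞}, 0 < a → 0 < b → ∀ s : S, smul (a + b) s = smul a s + smul b s
  add_right : ∀ {a : ℝ≥0∞}, 0 < a → ∀ s t : S, smul a (s + t) = smul a s + smul a t
  mono_left : ∀ {a b : ℝ≥0∞}, 0 < a → a ≤ b → ∀ s : S, smul a s ≤ smul b s
  mono_right : ∀ {a : ℝ≥0∞}, 0 < a → ∀ {s t : S}, s ≤ t → smul a s ≤ smul a t
  sup_left : ∀ u : ℕ → ℝ≥0∞, Monotone u → 0 < u 0 → ∀ s : S,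
    IsLUB (Set.range fun n => smul (u n) s) (smul (⨆ n, u n) s)
  sup_right : ∀ {a : ℝ≥0∞}, 0 < a → ∀ u : ℕ → S, Monotone u → ∀ x : S,
    IsLUB (Set.range u) x → IsLUB (Set.range fun n => smul a (u n)) (smul a x)
  one_smul : ∀ s : S, smul 1 s = s

/-- `D` is a dense subset of `S`: every element of `S` is the supremum of a rapidly
increasing sequence of elements of `D`. -/
def IsDenseSub {S : Type*} [AddCommMonoid S] [PartialOrder S] (D : Set S) : Prop :=
  ∀ s : S, ∃ u : ℕ → S, (∀ n, u n ∈ D) ∧ (∀ n, CC (u n) (u (n + 1))) ∧ IsLUB (Set.range u) s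

/-- `m` is the least upper bound of the functionals `l₁` and `l₂` in `F(S)`
(pointwise order). -/
def IsFSup {S : Type*} [AddCommMonoid S] [PartialOrder S] (l₁ l₂ m : S → ℝ≥0∞) : Prop :=
  IsFunctional m ∧ (∀ s, l₁ s ≤ m s) ∧ (∀ s, l₂ s ≤ m s) ∧
    ∀ d : S → ℝ≥0∞, IsFunctional d → (∀ s, l₁ s ≤ d s) → (∀ s, l₂ s ≤ d s) → ∀ s, m s ≤ d s

/-- `m` is the greatest lower bound of the functionals `l₁` and `l₂` in `F(S)`
(pointwise order). -/
def IsFInf {S : Type*} [AddCommMonoid S] [PartialOrder S] (l₁ l₂ m : S → ℝ≥0∞) : Prop :=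
  IsFunctional m ∧ (∀ s, m s ≤ l₁ s) ∧ (∀ s, m s ≤ l₂ s) ∧
    ∀ d : S → ℝ≥0∞, IsFunctional d → (∀ s, d s ≤ l₁ s) → (∀ s, d s ≤ l₂ s) → ∀ s, d s ≤ m s

/-- An isomorphism of ordered semigroups between `S` and the extended natural numbers. -/
def IsOrdSemigroupIso {S : Type*} [AddCommMonoid S] [PartialOrder S] (e : S ≃ ℕ∞) : Prop :=
  (∀ a b : S, e (a + b) = e a + e b) ∧ e 0 = 0 ∧ ∀ a b : S, a ≤ b ↔ e a ≤ e b

section CuntzSemigroup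

variable {S : Type*} [AddCommMonoid S] [PartialOrder S]

lemma CC.le {s t : S} (h : CC s t) : s ≤ t := by
  obtain ⟨n, hn⟩ := h (fun _ => t) monotone_const t (by simp) le_rfl
  exact hn

lemma CC.trans_le {r s t : S} (h : CC r s) (hst : s ≤ t) : CC r t :=
  fun u hu x hx htx => h u hu x hx (hst.trans htx)

lemma CuO5.isOrderedAddMonoid (hS : CuO5 S) : IsOrderedAddMonoid S where
  add_le_add_left _ _ h c := hS.addRightMono h c

lemma CuO5.exists_seq (hS : CuO5 S) (s : S) :
    ∃ u : ℕ → S, Monotone u ∧ (∀ n, CC (u n) s) ∧ IsLUB (Set.range u) s := by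
  obtain ⟨u, hu, hs⟩ := hS.O2 s
  exact ⟨u, monotone_nat_of_le_succ fun n => (hu n).le,
    fun n => (hu n).trans_le (hs.1 ⟨n + 1, rfl⟩), hs⟩

namespace IsFunctional

variable {l l₁ l₂ : S → ℝ≥0∞}

lemma ne_top_of_le (h : IsFunctional l) {x T : S} (hT : l T ≠ ∞) (hx : x ≤ T) : l x ≠ ∞ :=
  ne_top_of_le_ne_top hT (h.mono hx)

lemma toReal_mono (h : IsFunctional l) {x y : S} (hy : l y ≠ ∞) (hxy : x ≤ y) :
    (l x).toReal ≤ (l y).toReal :=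
  ENNReal.toReal_mono hy (h.mono hxy)

lemma toReal_add (h : IsFunctional l) {x y : S} (hx : l x ≠ ∞) (hy : l y ≠ ∞) :
    (l (x + y)).toReal = (l x).toReal + (l y).toReal := by
  rw [h.map_add, ENNReal.toReal_add hx hy]

lemma toReal_le_add (h : IsFunctional l) {x y z : S} (hy : l y ≠ ∞) (hz : l z ≠ ∞)
    (hxy : x ≤ y + z) : (l x).toReal ≤ (l y).toReal + (l z).toReal := by
  rw [← h.toReal_add hy hz]
  exact h.toReal_mono (by rw [h.map_add]; exact ENNReal.add_ne_top.2 ⟨hy, hz⟩) hxy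

/-- Two functionals finite at `x` are simultaneously approximated from way below `x`. -/
lemma exists_cc_approx (hS : CuO5 S) (h₁ : IsFunctional l₁) (h₂ : IsFunctional l₂) {x : S}
    (hx₁ : l₁ x ≠ ∞) (hx₂ : l₂ x ≠ ∞) {ε : ℝ} (hε : 0 < ε) :
    ∃ x', CC x' x ∧ (l₁ x).toReal ≤ (l₁ x').toReal + ε ∧
      (l₂ x).toReal ≤ (l₂ x').toReal + ε := by
  obtain ⟨u, hu, hux, hlub⟩ := hS.exists_seq x
  have key : ∀ {l : S → ℝ≥0∞}, IsFunctional l → l x ≠ ∞ →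
      ∀ᶠ n in Filter.atTop, (l x).toReal - ε < (l (u n)).toReal := by
    intro l h hx
    have ht : Filter.Tendsto (fun n => l (u n)) Filter.atTop (nhds (l x)) := by
      rw [h.map_sup u hu x hlub]
      exact tendsto_atTop_iSup fun _ _ hmn => h.mono (hu hmn)
    exact ((ENNReal.tendsto_toReal hx).comp ht).eventually_const_lt (sub_lt_self _ hε)
  obtain ⟨n, hn₁, hn₂⟩ := ((key h₁ hx₁).and (key h₂ hx₂)).exists
  exact ⟨u n, hux n, by linarith, by linarith⟩

/-- Axiom O5 as seen by two functionals finite at `x`: an element `r ≤ x` has a complement in `x`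
up to `ε`. -/
lemma exists_complement (hS : CuO5 S) (h₁ : IsFunctional l₁) (h₂ : IsFunctional l₂) {r x : S}
    (hx₁ : l₁ x ≠ ∞) (hx₂ : l₂ x ≠ ∞) (hr : r ≤ x) {ε : ℝ} (hε : 0 < ε) :
    ∃ r' z, r' + z ≤ x ∧ r' ≤ x ∧ z ≤ x ∧ (l₁ r).toReal ≤ (l₁ r').toReal + ε ∧
      (l₁ x).toReal ≤ (l₁ r).toReal + (l₁ z).toReal ∧
      (l₁ r).toReal + (l₁ z).toReal ≤ (l₁ x).toReal + ε ∧
      (l₂ x).toReal ≤ (l₂ r).toReal + (l₂ z).toReal ∧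
      (l₂ r).toReal + (l₂ z).toReal ≤ (l₂ x).toReal + ε := by
  have := hS.isOrderedAddMonoid
  have hr₁ := h₁.ne_top_of_le hx₁ hr
  have hr₂ := h₂.ne_top_of_le hx₂ hr
  obtain ⟨r', hr', ha, hb⟩ := exists_cc_approx hS h₁ h₂ hr₁ hr₂ hε
  obtain ⟨z, hz, hz'⟩ := hS.O5 hr' hr
  have hr'x : r' ≤ x := hr'.le.trans hr
  have hzx : z ≤ x := (le_add_of_nonneg_left (hS.zeroLe r')).trans hz
  have hz₁ := h₁.ne_top_of_le hx₁ hzx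
  have hz₂ := h₂.ne_top_of_le hx₂ hzx
  have e₁ := h₁.toReal_mono hx₁ hz
  have e₂ := h₂.toReal_mono hx₂ hz
  rw [h₁.toReal_add (h₁.ne_top_of_le hx₁ hr'x) hz₁] at e₁
  rw [h₂.toReal_add (h₂.ne_top_of_le hx₂ hr'x) hz₂] at e₂
  exact ⟨r', z, hz, hr'x, hzx, ha, h₁.toReal_le_add hr₁ hz₁ hz', by linarith,
    h₂.toReal_le_add hr₂ hz₂ hz', by linarith⟩

/-- Axiom O6 as seen by two functionals finite at `s + t`. -/
lemma exists_split (hS : CuO6 S) (h₁ : IsFunctional l₁) (h₂ : IsFunctional l₂) {s t x : S}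
    (hT₁ : l₁ (s + t) ≠ ∞) (hT₂ : l₂ (s + t) ≠ ∞) (hx : x ≤ s + t) {ε : ℝ} (hε : 0 < ε) :
    ∃ x' r w, x' ≤ x ∧ (l₁ x).toReal ≤ (l₁ x').toReal + ε ∧
      (l₂ x).toReal ≤ (l₂ x').toReal + ε ∧ x' ≤ r + w ∧ r ≤ s ∧ r ≤ x ∧ w ≤ t ∧ w ≤ x := by
  obtain ⟨x', hx', ha, hb⟩ := exists_cc_approx hS.toCuO5 h₁ h₂ (h₁.ne_top_of_le hT₁ hx)
    (h₂.ne_top_of_le hT₂ hx) hε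
  obtain ⟨r, w, h, hrs, hrx, hwt, hwx⟩ := hS.O6 hx hx'
  exact ⟨x', r, w, hx'.le, ha, hb, h, hrs, hrx, hwt, hwx⟩

/-- If `l₁ ≤ l₂ + ε` below `s` and below `t`, then `l₁` is almost dominated by `l₂` below
`s + t`. -/
lemma le_below_add (hS : CuO6 S) (h₁ : IsFunctional l₁) (h₂ : IsFunctional l₂) {s t : S}
    (hT₁ : l₁ (s + t) ≠ ∞) (hT₂ : l₂ (s + t) ≠ ∞) {ε : ℝ} (hε : 0 < ε)
    (hs : ∀ y ≤ s, (l₁ y).toReal ≤ (l₂ y).toReal + ε)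
    (ht : ∀ y ≤ t, (l₁ y).toReal ≤ (l₂ y).toReal + ε) (n : ℕ) :
    ∀ c ≤ s + t, (l₁ c).toReal ≤ (1 + (1 / 2) ^ n) * (l₂ c).toReal + 5 * (n + 1) * ε := by
  induction n with
  | zero =>
    intro c hc
    obtain ⟨c', r, w, hc', ha, hb, hle, hrs, hrc, hwt, hwc⟩ :=
      exists_split hS h₁ h₂ hT₁ hT₂ hc hε
    have e₁ := h₁.toReal_le_add (h₁.ne_top_of_le hT₁ (hrc.trans hc))
      (h₁.ne_top_of_le hT₁ (hwc.trans hc)) hle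
    have hc₂ := h₂.ne_top_of_le hT₂ hc
    have e₂ := h₂.toReal_mono hc₂ hrc
    have e₃ := h₂.toReal_mono hc₂ hwc
    have e₄ := hs r hrs
    have e₅ := ht w hwt
    norm_num
    linarith
  | succ n ih =>
    intro c hc
    obtain ⟨c', r, w, hc', ha, hb, hle, hrs, hrc, hwt, hwc⟩ :=
      exists_split hS h₁ h₂ hT₁ hT₂ hc hε
    have hc₁ := h₁.ne_top_of_le hT₁ hc
    have hc₂ := h₂.ne_top_of_le hT₂ hc
    have e₂ := h₂.toReal_le_add (h₂.ne_top_of_le hc₂ hrc) (h₂.ne_top_of_le hc₂ hwc) hle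
    obtain ⟨p, hpc, hp, hp'⟩ : ∃ p ≤ c, (l₁ p).toReal ≤ (l₂ p).toReal + ε ∧
        (l₂ c).toReal ≤ 2 * (l₂ p).toReal + ε := by
      rcases le_total (l₂ r).toReal (l₂ w).toReal with h | h
      · exact ⟨w, hwc, ht w hwt, by linarith⟩
      · exact ⟨r, hrc, hs r hrs, by linarith⟩
    obtain ⟨-, z, -, -, hz, -, f₁, -, -, f₂⟩ :=
      exists_complement hS.toCuO5 h₁ h₂ hc₁ hc₂ hpc hε
    have e₃ := ih z (hz.trans hc)
    have hk : (0 : ℝ) ≤ (1 / 2) ^ n := by positivity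
    have hk1 : ((1 : ℝ) / 2) ^ n ≤ 1 := pow_le_one₀ (by norm_num) (by norm_num)
    rw [pow_succ]
    push_cast
    set k : ℝ := (1 / 2) ^ n
    have e₄ : (1 + k) * (l₂ z).toReal ≤ (1 + k) * ((l₂ c).toReal - (l₂ p).toReal + ε) :=
      mul_le_mul_of_nonneg_left (by linarith) (by linarith)
    have e₅ : k * (l₂ c).toReal ≤ k * (2 * (l₂ p).toReal + ε) :=
      mul_le_mul_of_nonneg_left hp' hk
    have e₆ : k * ε ≤ ε := mul_le_of_le_one_left hε.le hk1
    linarith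

end IsFunctional

/-- The join of two functionals. -/
noncomputable def functionalSup (l₁ l₂ : S → ℝ≥0∞) (s : S) : ℝ≥0∞ :=
  ⨆ p : {p : S × S // p.1 + p.2 ≤ s}, l₁ p.1.1 + l₂ p.1.2

variable {l₁ l₂ : S → ℝ≥0∞}

lemma le_functionalSup {x y s : S} (h : x + y ≤ s) : l₁ x + l₂ y ≤ functionalSup l₁ l₂ s :=
  le_iSup (fun p : {p : S × S // p.1 + p.2 ≤ s} => l₁ p.1.1 + l₂ p.1.2) ⟨(x, y), h⟩

lemma functionalSup_mono {s t : S} (h : s ≤ t) :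
    functionalSup l₁ l₂ s ≤ functionalSup l₁ l₂ t :=
  iSup_le fun p => le_functionalSup (p.2.trans h)

namespace IsFunctional

lemma le_functionalSup_left (h₂ : IsFunctional l₂) (s : S) : l₁ s ≤ functionalSup l₁ l₂ s := by
  simpa [h₂.map_zero] using le_functionalSup (l₁ := l₁) (l₂ := l₂) (add_zero s).le

lemma le_functionalSup_right (h₁ : IsFunctional l₁) (s : S) : l₂ s ≤ functionalSup l₁ l₂ s := by
  simpa [h₁.map_zero] using le_functionalSup (l₁ := l₁) (l₂ := l₂) (zero_add s).le

lemma le_toReal_functionalSup (hS : CuO5 S) (h₁ : IsFunctional l₁) (h₂ : IsFunctional l₂)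
    {r s : S} (hs : functionalSup l₁ l₂ s ≠ ∞) (hr : r ≤ s) {ε : ℝ} (hε : 0 < ε) :
    (l₁ r).toReal - (l₂ r).toReal + (l₂ s).toReal ≤ (functionalSup l₁ l₂ s).toReal + ε := by
  have hs₁ := ne_top_of_le_ne_top hs (le_functionalSup_left h₂ s)
  have hs₂ := ne_top_of_le_ne_top hs (le_functionalSup_right h₁ s)
  obtain ⟨r', z, hle, hr', hz, e, -, -, f, -⟩ := exists_complement hS h₁ h₂ hs₁ hs₂ hr hε
  have := ENNReal.toReal_mono hs (le_functionalSup (l₁ := l₁) (l₂ := l₂) hle)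
  rw [ENNReal.toReal_add (h₁.ne_top_of_le hs₁ hr') (h₂.ne_top_of_le hs₂ hz)] at this
  linarith

/-- Up to `δ`, the difference `l₁ - l₂` at an element below `s + t` is bounded by the sum of its
values at an element below `s` and an element below `t`. -/
lemma exists_sub_le_add (hS : CuO6 S) (h₁ : IsFunctional l₁) (h₂ : IsFunctional l₂) {s t : S}
    (hT₁ : l₁ (s + t) ≠ ∞) (hT₂ : l₂ (s + t) ≠ ∞) {δ : ℝ} (hδ : 0 < δ) :
    ∃ r ≤ s, ∃ w ≤ t, ∀ x ≤ s + t, (l₁ x).toReal - (l₂ x).toReal ≤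
      (l₁ r).toReal - (l₂ r).toReal + ((l₁ w).toReal - (l₂ w).toReal) + δ := by
  have := hS.toCuO5.isOrderedAddMonoid
  set C := (l₁ (s + t)).toReal
  have hC : 0 ≤ C := ENNReal.toReal_nonneg
  obtain ⟨n, hn⟩ := exists_pow_lt_of_lt_one (show 0 < δ / 2 / (C + 1) by positivity)
    (show (1 / 2 : ℝ) < 1 by norm_num)
  have hnC : (1 / 2) ^ n * C ≤ δ / 2 := by
    rw [lt_div_iff₀ (by positivity)] at hn
    have : (0 : ℝ) ≤ (1 / 2) ^ n := by positivity
    linarith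
  obtain ⟨ε, hε, hεδ⟩ : ∃ ε > 0, (5 + 15 * ((n : ℝ) + 1)) * ε ≤ δ / 2 :=
    ⟨δ / 2 / (5 + 15 * ((n : ℝ) + 1)), by positivity, by field_simp; rfl⟩
  let M : Set ℝ := (fun x => (l₁ x).toReal - (l₂ x).toReal) '' {x | x ≤ s + t}
  have hMb : BddAbove M := by
    refine ⟨C, ?_⟩
    rintro _ ⟨x, hx, rfl⟩
    have := h₁.toReal_mono hT₁ hx
    have : 0 ≤ (l₂ x).toReal := ENNReal.toReal_nonneg
    simp only
    linarith
  have hMne : M.Nonempty := ⟨_, s + t, le_rfl, rfl⟩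
  have hM : ∀ x ≤ s + t, (l₁ x).toReal - (l₂ x).toReal ≤ sSup M := fun x hx =>
    le_csSup hMb ⟨x, hx, rfl⟩
  obtain ⟨_, ⟨x, hx, rfl⟩, hxM⟩ := exists_lt_of_lt_csSup hMne (sub_lt_self (sSup M) hε)
  simp only at hxM
  have hx₁ := h₁.ne_top_of_le hT₁ hx
  have hx₂ := h₂.ne_top_of_le hT₂ hx
  have hlow : ∀ y ≤ x, (l₂ y).toReal ≤ (l₁ y).toReal + 3 * ε := by
    intro y hy
    obtain ⟨-, z, -, -, hz, -, e₁, -, -, e₂⟩ := exists_complement hS.toCuO5 h₁ h₂ hx₁ hx₂ hy hε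
    have := hM z (hz.trans hx)
    linarith
  obtain ⟨x', r, w, hx', ha, hb, hle, hrs, hrx, hwt, hwx⟩ :=
    exists_split hS h₁ h₂ hT₁ hT₂ hx hε
  have hrw : r + w ≤ s + t := add_le_add hrs hwt
  have hrw₁ := h₁.ne_top_of_le hT₁ hrw
  have hrw₂ := h₂.ne_top_of_le hT₂ hrw
  obtain ⟨-, v, -, -, hv, -, e₁, e₁', e₂, e₂'⟩ :=
    exists_complement hS.toCuO5 h₁ h₂ hrw₁ hrw₂ hle hε
  have hv' := le_below_add hS h₂ h₁ hrw₂ hrw₁ (show 0 < 3 * ε by positivity)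
    (fun y hy => hlow y (hy.trans hrx)) (fun y hy => hlow y (hy.trans hwx)) n v hv
  have hvC : (1 / 2) ^ n * (l₁ v).toReal ≤ (1 / 2) ^ n * C :=
    mul_le_mul_of_nonneg_left (h₁.toReal_mono hT₁ (hv.trans hrw)) (by positivity)
  rw [h₁.toReal_add (h₁.ne_top_of_le hx₁ hrx) (h₁.ne_top_of_le hx₁ hwx)] at e₁ e₁'
  rw [h₂.toReal_add (h₂.ne_top_of_le hx₂ hrx) (h₂.ne_top_of_le hx₂ hwx)] at e₂ e₂'
  have hx'₂ := h₂.toReal_mono hx₂ hx'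
  refine ⟨r, hrs, w, hwt, fun y hy => ?_⟩
  have := hM y hy
  linarith

lemma functionalSup_add_le (hS : CuO6 S) (h₁ : IsFunctional l₁) (h₂ : IsFunctional l₂)
    (s t : S) :
    functionalSup l₁ l₂ (s + t) ≤ functionalSup l₁ l₂ s + functionalSup l₁ l₂ t := by
  have := hS.toCuO5.isOrderedAddMonoid
  by_cases hs : functionalSup l₁ l₂ s = ∞
  · simp [hs]
  by_cases ht : functionalSup l₁ l₂ t = ∞
  · simp [ht]
  have hs₁ := ne_top_of_le_ne_top hs (le_functionalSup_left h₂ s)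
  have hs₂ := ne_top_of_le_ne_top hs (le_functionalSup_right h₁ s)
  have ht₁ := ne_top_of_le_ne_top ht (le_functionalSup_left h₂ t)
  have ht₂ := ne_top_of_le_ne_top ht (le_functionalSup_right h₁ t)
  have hT₁ : l₁ (s + t) ≠ ∞ := by rw [h₁.map_add]; exact ENNReal.add_ne_top.2 ⟨hs₁, ht₁⟩
  have hT₂ : l₂ (s + t) ≠ ∞ := by rw [h₂.map_add]; exact ENNReal.add_ne_top.2 ⟨hs₂, ht₂⟩
  refine iSup_le ?_
  rintro ⟨⟨x, y⟩, hxy⟩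
  have hx : x ≤ s + t := (le_add_of_nonneg_right (hS.zeroLe y)).trans hxy
  have hy : y ≤ s + t := (le_add_of_nonneg_left (hS.zeroLe x)).trans hxy
  have hx₁ := h₁.ne_top_of_le hT₁ hx
  have hx₂ := h₂.ne_top_of_le hT₂ hx
  have hy₂ := h₂.ne_top_of_le hT₂ hy
  rw [← ENNReal.toReal_le_toReal (ENNReal.add_ne_top.2 ⟨hx₁, hy₂⟩)
    (ENNReal.add_ne_top.2 ⟨hs, ht⟩), ENNReal.toReal_add hx₁ hy₂, ENNReal.toReal_add hs ht]
  refine le_of_forall_pos_le_add fun ε hε => ?_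
  have hε3 : 0 < ε / 3 := by positivity
  obtain ⟨r, hr, w, hw, h⟩ := exists_sub_le_add hS h₁ h₂ hT₁ hT₂ hε3
  have e₁ := h x hx
  have e₂ := le_toReal_functionalSup hS.toCuO5 h₁ h₂ hs hr hε3
  have e₃ := le_toReal_functionalSup hS.toCuO5 h₁ h₂ ht hw hε3
  have e₄ := h₂.toReal_mono hT₂ hxy
  rw [h₂.toReal_add hx₂ hy₂, h₂.toReal_add hs₂ ht₂] at e₄
  linarith

lemma functionalSup (hS : CuO6 S) (h₁ : IsFunctional l₁) (h₂ : IsFunctional l₂) :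
    IsFunctional (functionalSup l₁ l₂) := by
  have := hS.toCuO5.isOrderedAddMonoid
  refine ⟨?_, fun s t => (functionalSup_add_le hS h₁ h₂ s t).antisymm ?_, functionalSup_mono,
    fun u hu x hx => le_antisymm ?_ (iSup_le fun n => functionalSup_mono (hx.1 ⟨n, rfl⟩))⟩
  · refine le_antisymm (iSup_le ?_) zero_le
    rintro ⟨⟨x, y⟩, hxy⟩
    have hx : x ≤ 0 := (le_add_of_nonneg_right (hS.zeroLe y)).trans hxy
    have hy : y ≤ 0 := (le_add_of_nonneg_left (hS.zeroLe x)).trans hxy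
    calc l₁ x + l₂ y ≤ l₁ 0 + l₂ 0 := add_le_add (h₁.mono hx) (h₂.mono hy)
      _ = 0 := by rw [h₁.map_zero, h₂.map_zero, add_zero]
  · have hne (r : S) : Nonempty {p : S × S // p.1 + p.2 ≤ r} := ⟨⟨(r, 0), (add_zero r).le⟩⟩
    refine ENNReal.iSup_add_iSup_le ?_
    rintro ⟨⟨x, y⟩, hxy⟩ ⟨⟨x', y'⟩, hxy'⟩
    calc l₁ x + l₂ y + (l₁ x' + l₂ y') = l₁ (x + x') + l₂ (y + y') := by
          rw [h₁.map_add, h₂.map_add]; abel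
      _ ≤ _ := le_functionalSup (by
          rw [add_add_add_comm]; exact add_le_add hxy hxy')
  · refine iSup_le ?_
    rintro ⟨⟨y, z⟩, hyz⟩
    obtain ⟨v, hv, hvy, hvl⟩ := hS.exists_seq y
    obtain ⟨w, hw, hwz, hwl⟩ := hS.exists_seq z
    simp only
    rw [h₁.map_sup v hv y hvl, h₂.map_sup w hw z hwl]
    refine ENNReal.iSup_add_iSup_le fun i j => ?_
    obtain ⟨n, hn⟩ := hS.O3 (hvy i) (hwz j) u hu x hx hyz
    exact le_iSup_of_le n (le_functionalSup hn)

lemma functionalSup_le {d : S → ℝ≥0∞} (hd : IsFunctional d) (h₁ : ∀ s, l₁ s ≤ d s)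
    (h₂ : ∀ s, l₂ s ≤ d s) (s : S) : _root_.functionalSup l₁ l₂ s ≤ d s :=
  iSup_le fun p => (add_le_add (h₁ _) (h₂ _)).trans ((hd.map_add _ _).symm.le.trans (hd.mono p.2))

lemma iSup_of_directed {ι : Type*} [Nonempty ι] {f : ι → S → ℝ≥0∞}
    (hf : ∀ i, IsFunctional (f i)) (hdir : Directed (· ≤ ·) f) :
    IsFunctional fun s => ⨆ i, f i s where
  map_zero := by simp [(hf _).map_zero]
  map_add s t := by
    simp only [(hf _).map_add]
    refine (ENNReal.iSup_add_iSup fun i j => ?_).symm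
    obtain ⟨k, hik, hjk⟩ := hdir i j
    exact ⟨k, add_le_add (hik s) (hjk t)⟩
  mono h := iSup_mono fun i => (hf i).mono h
  map_sup u hu x hx := by
    rw [iSup_comm]
    exact iSup_congr fun i => (hf i).map_sup u hu x hx

lemma exists_isLUB (hS : CuO6 S) (A : Set {l : S → ℝ≥0∞ // IsFunctional l}) :
    ∃ m, IsLUB A m := by
  classical
  let _ : SemilatticeSup {l : S → ℝ≥0∞ // IsFunctional l} :=
    { (inferInstance : PartialOrder {l : S → ℝ≥0∞ // IsFunctional l}) with
      sup := fun a b => ⟨_, a.2.functionalSup hS b.2⟩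
      le_sup_left := fun _ b s => b.2.le_functionalSup_left s
      le_sup_right := fun a _ s => a.2.le_functionalSup_right s
      sup_le := fun _ _ d ha hb s => d.2.functionalSup_le ha hb s }
  let _ : OrderBot {l : S → ℝ≥0∞ // IsFunctional l} :=
    { bot := ⟨fun _ => 0, ⟨rfl, by simp, by simp, by simp⟩⟩
      bot_le := fun _ _ => zero_le }
  let g : Finset A → {l : S → ℝ≥0∞ // IsFunctional l} := fun F => F.sup Subtype.val
  have hg : Monotone g := fun _ _ h => Finset.sup_mono h
  have hdir : Directed (· ≤ ·) fun F => (g F : S → ℝ≥0∞) := fun F G =>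
    ⟨F ∪ G, hg Finset.subset_union_left, hg Finset.subset_union_right⟩
  refine ⟨⟨_, iSup_of_directed (fun F => (g F).2) hdir⟩, fun a ha s => ?_, fun d hd s => ?_⟩
  · have h : a ≤ g {⟨a, ha⟩} := by simp [g]
    exact (h s).trans (le_iSup (fun F => (g F : S → ℝ≥0∞) s) _)
  · refine iSup_le fun F => ?_
    have h : g F ≤ d := Finset.sup_le fun a _ => hd a.2
    exact h s

end IsFunctional

end CuntzSemigroup

/-- F(S) is a complete lattice: every subset has a least upper bound
and a greatest lower bound in F(S). -/
theorem functionals_completeLattice {S : Type*} [AddCommMonoid S] [PartialOrder S]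
    (hS : CuO6 S) (A : Set {l : S → ℝ≥0∞ // IsFunctional l}) :
    (∃ msup : {l : S → ℝ≥0∞ // IsFunctional l}, IsLUB A msup) ∧
    (∃ minf : {l : S → ℝ≥0∞ // IsFunctional l}, IsGLB A minf) := by
  refine ⟨IsFunctional.exists_isLUB hS A, ?_⟩
  obtain ⟨m, hm⟩ := IsFunctional.exists_isLUB hS (lowerBounds A)
  exact ⟨m, isLUB_lowerBounds.1 hm⟩
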